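/- Let f : ℝ → ℝ be C^∞ on a neighborhood of a point α with f(α) = 0 and f′(α) ≠ 0, and set c₂ = f″(α)/(2 f′(α)), c₃ = f‴(α)/(6 f′(α)), c₄ = f⁗(α)/(24 f′(α)). Consider the three-step iteration function Φ defined by: y(x) = x − f(x)/f′(x); z(x) = y(x) − ((2f(x) − f(y(x)))/(2f(x) − 5f(y(x))))·(f(y(x))/f′(x)); and Φ(x) = z(x) − f(z(x))/D(x), where D(x) = 2 f[x, z(x)] + f[y(x), z(x)] − f[x, y(x)] + (x − z(x))·f[y(x), x, x] − f′(x) is the Hermite-interpolation approximation to f′(z(x)). Then the method has local order of convergence eight; more precisely, as x → α, Φ(x) − α = (c₂³c₃² − c₂²c₃c₄)(x−α)⁸ + O((x−α)⁹). -/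

import Mathlib

open Filter Topology Asymptotics

/-- The Newton iterate `y(x) = x − f(x)/f′(x)`. -/
noncomputable def newtonStep (f : ℝ → ℝ) (x : ℝ) : ℝ := x - f x / deriv f x

/-- The second step of Kung's fourth-order family with `β = −1/2`:
`z(x) = y − ((2f(x) − f(y))/(2f(x) − 5f(y)))·(f(y)/f′(x))` where `y = newtonStep f x`. -/
noncomputable def kungStep (f : ℝ → ℝ) (x : ℝ) : ℝ :=
  newtonStep f x -
    ((2 * f x - f (newtonStep f x)) / (2 * f x - 5 * f (newtonStep f x))) *
      (f (newtonStep f x) / deriv f x)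

/-- The first-order divided difference `f[u,v] = (f(u) − f(v))/(u − v)`. -/
noncomputable def divDiff (f : ℝ → ℝ) (u v : ℝ) : ℝ := (f u - f v) / (u - v)

/-- The second-order divided difference with repeated node `v`:
`f[u,v,v] = (f[u,v] − f′(v))/(u − v)`. -/
noncomputable def divDiff2 (f : ℝ → ℝ) (u v : ℝ) : ℝ :=
  (divDiff f u v - deriv f v) / (u - v)

/-- The Hermite-interpolation approximation to `f′(z(x))`:
`D(x) = 2 f[x,z] + f[y,z] − f[x,y] + (x−z)·f[y,x,x] − f′(x)`. -/
noncomputable def hermiteDerivApprox (f : ℝ → ℝ) (x : ℝ) : ℝ :=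
  2 * divDiff f x (kungStep f x) + divDiff f (newtonStep f x) (kungStep f x) -
    divDiff f x (newtonStep f x) +
    (x - kungStep f x) * divDiff2 f (newtonStep f x) x - deriv f x

/-- The three-step eighth-order iteration function `Φ(x) = z(x) − f(z(x))/D(x)`. -/
noncomputable def eighthOrderStep (f : ℝ → ℝ) (x : ℝ) : ℝ :=
  kungStep f x - f (kungStep f x) / hermiteDerivApprox f x


set_option linter.unreachableTactic false
set_option linter.unusedTactic false

/-- Bounded near `0`, punctured. -/
def Bd (u : ℝ → ℝ) : Prop := u =O[𝓝[≠] (0:ℝ)] (fun _ => (1:ℝ))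

theorem Bd.add {u v : ℝ → ℝ} (hu : Bd u) (hv : Bd v) : Bd (fun e => u e + v e) :=
  IsBigO.add hu hv
theorem Bd.sub {u v : ℝ → ℝ} (hu : Bd u) (hv : Bd v) : Bd (fun e => u e - v e) :=
  IsBigO.sub hu hv
theorem Bd.neg {u : ℝ → ℝ} (hu : Bd u) : Bd (fun e => - u e) :=
  IsBigO.neg_left hu
theorem Bd.mul {u v : ℝ → ℝ} (hu : Bd u) (hv : Bd v) : Bd (fun e => u e * v e) := by
  have := IsBigO.mul hu hv
  simpa [Bd] using this
theorem Bd.const (c : ℝ) : Bd (fun _ => c) := isBigO_const_const c one_ne_zero _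
theorem Bd.pow {u : ℝ → ℝ} (hu : Bd u) (n : ℕ) : Bd (fun e => u e ^ n) := by
  have := IsBigO.pow hu n
  simpa [Bd] using this
theorem tendsto_id0 : Tendsto (fun e : ℝ => e) (𝓝[≠] (0:ℝ)) (𝓝 0) :=
  tendsto_nhdsWithin_of_tendsto_nhds tendsto_id
theorem Bd.id : Bd (fun e => e) := tendsto_id0.isBigO_one ℝ

theorem Bd.tendsto {u : ℝ → ℝ} (hu : Bd u) : Tendsto (fun e => e * u e) (𝓝[≠] (0:ℝ)) (𝓝 0) := by
  have h : (fun e => e * u e) =O[𝓝[≠] (0:ℝ)] (fun e => e * 1) :=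
    (isBigO_refl (fun e : ℝ => e) _).mul hu
  exact h.trans_tendsto (by simpa using tendsto_id0)

theorem Bd.ne {u : ℝ → ℝ} (hu : Bd u) (c : ℝ) (hc : c ≠ 0) :
    ∀ᶠ e in 𝓝[≠] (0:ℝ), c + e * u e ≠ 0 := by
  have : Tendsto (fun e => c + e * u e) (𝓝[≠] (0:ℝ)) (𝓝 (c + 0)) :=
    tendsto_const_nhds.add hu.tendsto
  exact this.eventually_ne (by simpa using hc)

theorem Bd.inv {u : ℝ → ℝ} (hu : Bd u) (c : ℝ) (hc : c ≠ 0) :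
    Bd (fun e => (c + e * u e)⁻¹) := by
  have : Tendsto (fun e => c + e * u e) (𝓝[≠] (0:ℝ)) (𝓝 (c + 0)) :=
    tendsto_const_nhds.add hu.tendsto
  exact (this.inv₀ (by simpa using hc)).isBigO_one ℝ

theorem Bd.le_abs {u : ℝ → ℝ} (hu : Bd u) : ∀ᶠ e in 𝓝[≠] (0:ℝ), |e ^ 2 * u e| ≤ |e| := by
  have h := hu.tendsto.abs
  simp only [abs_zero] at h
  filter_upwards [h.eventually_lt_const zero_lt_one] with e he
  have : e ^ 2 * u e = e * (e * u e) := by ring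
  rw [this, abs_mul]
  nlinarith [abs_nonneg e]

theorem Bd.of_le {u : ℝ → ℝ} (C : ℝ) (h : ∀ᶠ e in 𝓝[≠] (0:ℝ), |u e| ≤ C) : Bd u := by
  refine IsBigO.of_bound C ?_
  simpa using h

/-- Lipschitz bound for the Taylor remainder. -/
theorem lip_aux (R : ℝ → ℝ) (hd : ∀ᶠ t in 𝓝 (0:ℝ), DifferentiableAt ℝ R t)
    (hR : (fun t => deriv R t) =O[𝓝 (0:ℝ)] fun t => t ^ 5)
    (u v : ℝ → ℝ) (hu : ∀ᶠ e in 𝓝[≠] (0:ℝ), |u e| ≤ |e|)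
    (hv : ∀ᶠ e in 𝓝[≠] (0:ℝ), |v e| ≤ |e|) :
    ∃ lam : ℝ → ℝ, Bd lam ∧ ∀ᶠ e in 𝓝[≠] (0:ℝ), R (u e) - R (v e) = e ^ 5 * lam e * (u e - v e) := by
  obtain ⟨C, hC0, hC⟩ := hR.exists_pos
  rw [IsBigOWith] at hC
  obtain ⟨δ, hδ, hball⟩ := Metric.eventually_nhds_iff.1 (hd.and hC)
  have key : ∀ᶠ e in 𝓝[≠] (0:ℝ), e ≠ 0 ∧ |R (u e) - R (v e)| ≤ C * |e| ^ 5 * |u e - v e| := by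
    have hsmall : ∀ᶠ e in 𝓝[≠] (0:ℝ), |e| < δ := by
      have := tendsto_id0.abs
      simp only [abs_zero] at this
      exact this.eventually_lt_const hδ
    filter_upwards [hu, hv, hsmall, self_mem_nhdsWithin] with e h1 h2 h3 h4
    refine ⟨h4, ?_⟩
    have := (convex_Icc (-|e|) |e|).norm_image_sub_le_of_norm_deriv_le (f := R) (C := C * |e| ^ 5)
      (x := v e) (y := u e)
      (fun x hx => (hball (by
        rw [Real.dist_eq, sub_zero]; exact lt_of_le_of_lt (abs_le.2 hx) h3)).1)
      (fun x hx => by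
        have hx' : |x| ≤ |e| := abs_le.2 hx
        have := (hball (y := x) (by
          rw [Real.dist_eq, sub_zero]; exact lt_of_le_of_lt hx' h3)).2
        refine this.trans ?_
        rw [norm_pow, Real.norm_eq_abs]
        gcongr)
      (abs_le.1 h2) (abs_le.1 h1)
    simpa [Real.norm_eq_abs] using this
  refine ⟨fun e => (R (u e) - R (v e)) / (e ^ 5 * (u e - v e)), Bd.of_le C ?_, ?_⟩
  · filter_upwards [key] with e ⟨h0, h⟩
    by_cases huv : u e - v e = 0
    · simp [huv, hC0.le]
    rw [abs_div, div_le_iff₀ (by positivity), abs_mul, abs_pow]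
    linarith
  · filter_upwards [key] with e ⟨h0, h⟩
    by_cases huv : u e - v e = 0
    · have : u e = v e := by linarith
      simp [this]
    · field_simp

theorem newton_scale (f : ℝ → ℝ) (α a : ℝ) (ha : a ≠ 0) (t : ℝ) :
    newtonStep f (α + t) = α + newtonStep (fun t => f (α + t) / a) t := by
  have hd : deriv (fun t => f (α + t) / a) t = deriv f (α + t) / a := by
    rw [deriv_div_const, deriv_comp_const_add]
  unfold newtonStep
  rw [hd, div_div_div_cancel_right₀ ha]; ring

theorem kung_scale (f : ℝ → ℝ) (α a : ℝ) (ha : a ≠ 0) (t : ℝ) :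
    kungStep f (α + t) = α + kungStep (fun t => f (α + t) / a) t := by
  have hd : deriv (fun t => f (α + t) / a) t = deriv f (α + t) / a := by
    rw [deriv_div_const, deriv_comp_const_add]
  unfold kungStep
  rw [hd, newton_scale f α a ha, div_div_div_cancel_right₀ ha]
  generalize newtonStep (fun t => f (α + t) / a) t = y
  have e1 : 2 * (f (α + t) / a) - f (α + y) / a = (2 * f (α + t) - f (α + y)) / a := by ring
  have e2 : 2 * (f (α + t) / a) - 5 * (f (α + y) / a) = (2 * f (α + t) - 5 * f (α + y)) / a := by
    ring
  simp only [e1, e2]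
  rw [div_div_div_cancel_right₀ ha]; ring

theorem divDiff_scale (f : ℝ → ℝ) (α a : ℝ) (u v : ℝ) :
    divDiff (fun t => f (α + t) / a) u v = divDiff f (α + u) (α + v) / a := by
  unfold divDiff
  rw [add_sub_add_left_eq_sub, ← sub_div, div_right_comm]

theorem divDiff2_scale (f : ℝ → ℝ) (α a : ℝ) (u v : ℝ) :
    divDiff2 (fun t => f (α + t) / a) u v = divDiff2 f (α + u) (α + v) / a := by
  have hd : deriv (fun t => f (α + t) / a) v = deriv f (α + v) / a := by
    rw [deriv_div_const, deriv_comp_const_add]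
  unfold divDiff2
  rw [hd, divDiff_scale, add_sub_add_left_eq_sub, ← sub_div, div_right_comm]

theorem eighth_scale (f : ℝ → ℝ) (α a : ℝ) (ha : a ≠ 0) (t : ℝ) :
    eighthOrderStep f (α + t) = α + eighthOrderStep (fun t => f (α + t) / a) t := by
  have hd : deriv (fun t => f (α + t) / a) t = deriv f (α + t) / a := by
    rw [deriv_div_const, deriv_comp_const_add]
  have hD : hermiteDerivApprox (fun t => f (α + t) / a) t = hermiteDerivApprox f (α + t) / a := by
    unfold hermiteDerivApprox
    rw [hd, divDiff_scale, divDiff_scale, divDiff_scale, divDiff2_scale, newton_scale f α a ha,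
      kung_scale f α a ha]
    ring
  unfold eighthOrderStep
  rw [hD, kung_scale f α a ha, div_div_div_cancel_right₀ ha]
  ring

theorem taylor_deriv (f : ℝ → ℝ) (α : ℝ)
    (hf : ∃ s ∈ 𝓝 α, ContDiffOn ℝ (⊤ : ℕ∞) f s) :
    (∀ᶠ x in 𝓝 α, DifferentiableAt ℝ f x) ∧
    (fun x => deriv f x - (deriv f α + iteratedDeriv 2 f α * (x - α)
      + iteratedDeriv 3 f α / 2 * (x - α) ^ 2 + iteratedDeriv 4 f α / 6 * (x - α) ^ 3
      + iteratedDeriv 5 f α / 24 * (x - α) ^ 4)) =O[𝓝 α] fun x => (x - α) ^ 5 := by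
  obtain ⟨s, hs, hfs⟩ := hf
  obtain ⟨ε, hε, hb⟩ := Metric.mem_nhds_iff.1 hs
  have hfb := hfs.mono hb
  have hα : α ∈ Metric.ball α ε := Metric.mem_ball_self hε
  have hbn : Metric.ball α ε ∈ 𝓝 α := Metric.ball_mem_nhds α hε
  have ho : IsOpen (Metric.ball α ε) := Metric.isOpen_ball
  constructor
  · filter_upwards [hbn] with x hx
    exact ((hfb.differentiableOn (by simp)) x hx).differentiableAt (ho.mem_nhds hx)
  have hd : ContDiffOn ℝ (5:ℕ) (deriv f) (Metric.ball α ε) :=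
    hfb.deriv_of_isOpen ho (WithTop.coe_le_coe.2 le_top)
  have ht := taylor_isLittleO (convex_ball α ε) hα hd
  rw [ho.nhdsWithin_eq hα] at ht
  have h2 : (fun x => iteratedDeriv 6 f α / 120 * (x - α) ^ 5) =O[𝓝 α] fun x => (x - α) ^ 5 :=
    (isBigO_refl _ _).const_mul_left _
  refine (ht.isBigO.add h2).congr_left ?_
  intro x
  have hk : ∀ k, iteratedDerivWithin k (deriv f) (Metric.ball α ε) α = iteratedDeriv (k+1) f α := by
    intro k
    rw [iteratedDeriv_succ']
    exact iteratedDerivWithin_of_isOpen ho hα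
  simp only [taylor_within_apply, Finset.sum_range_succ, Finset.sum_range_zero, hk, smul_eq_mul,
    Nat.factorial]
  simp only [zero_add, iteratedDeriv_one]
  norm_num
  ring

theorem main_aux (g : ℝ → ℝ) (c₂ c₃ c₄ c₅ : ℝ) (h0 : g 0 = 0)
    (hd : ∀ᶠ t in 𝓝 (0:ℝ), DifferentiableAt ℝ g t)
    (hG : (fun t => deriv g t - (1 + 2 * c₂ * t + 3 * c₃ * t ^ 2 + 4 * c₄ * t ^ 3
      + 5 * c₅ * t ^ 4)) =O[𝓝 (0:ℝ)] fun t => t ^ 5) :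
    (fun e => eighthOrderStep g e - (c₂ ^ 3 * c₃ ^ 2 - c₂ ^ 2 * c₃ * c₄) * e ^ 8)
      =O[𝓝[≠] (0:ℝ)] fun e => e ^ 9 := by
  obtain ⟨P, hP⟩ : ∃ P : ℝ → ℝ, ∀ t, P t = t + c₂ * t ^ 2 + c₃ * t ^ 3 + c₄ * t ^ 4 + c₅ * t ^ 5 :=
    ⟨_, fun _ => rfl⟩
  obtain ⟨R, hRdef⟩ : ∃ R : ℝ → ℝ, ∀ t, R t = g t - P t := ⟨_, fun _ => rfl⟩
  have hPd : ∀ t, HasDerivAt P (1 + 2 * c₂ * t + 3 * c₃ * t ^ 2 + 4 * c₄ * t ^ 3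
      + 5 * c₅ * t ^ 4) t := by
    intro t
    have : P = fun t => t + c₂ * t ^ 2 + c₃ * t ^ 3 + c₄ * t ^ 4 + c₅ * t ^ 5 := funext hP
    rw [this]
    have := ((((hasDerivAt_id t).add ((hasDerivAt_pow 2 t).const_mul c₂)).add
      ((hasDerivAt_pow 3 t).const_mul c₃)).add ((hasDerivAt_pow 4 t).const_mul c₄)).add
      ((hasDerivAt_pow 5 t).const_mul c₅)
    refine this.congr_deriv ?_
    norm_num
    ring
  have hRfun : R = fun t => g t - P t := funext hRdef
  have hRd : ∀ᶠ t in 𝓝 (0:ℝ), DifferentiableAt ℝ R t := by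
    filter_upwards [hd] with t ht
    rw [hRfun]
    exact ht.sub (hPd t).differentiableAt
  have hRO : (fun t => deriv R t) =O[𝓝 (0:ℝ)] fun t => t ^ 5 := by
    refine hG.congr' ?_ EventuallyEq.rfl
    filter_upwards [hd] with t ht
    rw [hRfun]
    exact ((ht.hasDerivAt.sub (hPd t)).deriv).symm
  have hR0 : R 0 = 0 := by rw [hRdef, hP, h0]; ring
  have hgR : ∀ t, g t = P t + R t := fun t => by rw [hRdef]; ring
  have hne : ∀ᶠ e in 𝓝[≠] (0:ℝ), e ≠ 0 := self_mem_nhdsWithin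
  -- expansion of the derivative
  obtain ⟨r₁, hb_r₁, h_r₁⟩ : ∃ r₁ : ℝ → ℝ, Bd r₁ ∧ ∀ᶠ e in 𝓝[≠] (0:ℝ), deriv g e =
      1 + 2 * c₂ * e + 3 * c₃ * e ^ 2 + 4 * c₄ * e ^ 3 + 5 * c₅ * e ^ 4 + e ^ 5 * r₁ e := by
    refine ⟨fun e => (deriv g e - (1 + 2 * c₂ * e + 3 * c₃ * e ^ 2 + 4 * c₄ * e ^ 3
      + 5 * c₅ * e ^ 4)) / e ^ 5, ?_, ?_⟩
    · obtain ⟨C, hC0, hC⟩ := (hG.mono (nhdsWithin_le_nhds (s := {0}ᶜ))).exists_pos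
      rw [IsBigOWith] at hC
      refine Bd.of_le C ?_
      filter_upwards [hC, hne] with e he h0
      rw [abs_div, div_le_iff₀ (by positivity)]
      exact he
    · filter_upwards [hne] with e he
      field_simp
      ring
  -- expansion of g
  obtain ⟨r₀, hb_r₀, h_r₀⟩ := lip_aux R hRd hRO (fun e => e) (fun _ => 0)
    (Eventually.of_forall fun e => le_rfl) (Eventually.of_forall fun e => by simp)
  obtain ⟨s₂, hb_s₂, h_s₂⟩ : ∃ F : ℝ → ℝ, Bd F ∧ ∀ e, F e =
      3 * c₃ + 4 * c₄ * e + 5 * c₅ * e ^ 2 + e ^ 3 * r₁ e :=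
    ⟨_, by repeat' first | assumption | exact Bd.id | exact Bd.const _ | apply Bd.add | apply Bd.sub | apply Bd.mul | apply Bd.neg | apply Bd.pow, fun _ => rfl⟩
  obtain ⟨s, hb_s, h_s⟩ : ∃ F : ℝ → ℝ, Bd F ∧ ∀ e, F e =
      2 * c₂ + e * s₂ e :=
    ⟨_, by repeat' first | assumption | exact Bd.id | exact Bd.const _ | apply Bd.add | apply Bd.sub | apply Bd.mul | apply Bd.neg | apply Bd.pow, fun _ => rfl⟩
  obtain ⟨μ₂, hb_μ₂, h_μ₂⟩ : ∃ F : ℝ → ℝ, Bd F ∧ ∀ e, F e =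
      c₃ + c₄ * e + c₅ * e ^ 2 + e ^ 3 * r₀ e :=
    ⟨_, by repeat' first | assumption | exact Bd.id | exact Bd.const _ | apply Bd.add | apply Bd.sub | apply Bd.mul | apply Bd.neg | apply Bd.pow, fun _ => rfl⟩
  have hG' : ∀ᶠ e in 𝓝[≠] (0:ℝ), deriv g e = 1 + e * s e := by
    filter_upwards [h_r₁] with e h1
    rw [h1, h_s, h_s₂]; ring
  have hg' : ∀ᶠ e in 𝓝[≠] (0:ℝ), g e = e * (1 + c₂ * e + e ^ 2 * μ₂ e) := by
    filter_upwards [h_r₀] with e h1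
    rw [hgR, hP, h_μ₂]
    rw [hR0] at h1
    linear_combination h1
  have hGne := hb_s.ne 1 one_ne_zero
  have hGinv := hb_s.inv 1 one_ne_zero
  obtain ⟨M, hb_M, h_M⟩ : ∃ F : ℝ → ℝ, Bd F ∧ ∀ e, F e =
      (3 * c₄ + 4 * c₅ * e + e ^ 2 * (r₁ e - r₀ e)) - 2 * c₂ * (2 * c₃ - 2 * c₂ ^ 2) - s₂ e * (c₂ + (2 * c₃ - 2 * c₂ ^ 2) * e) :=
    ⟨_, by repeat' first | assumption | exact Bd.id | exact Bd.const _ | apply Bd.add | apply Bd.sub | apply Bd.mul | apply Bd.neg | apply Bd.pow, fun _ => rfl⟩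
  obtain ⟨w₂, hb_w₂, h_w₂⟩ : ∃ F : ℝ → ℝ, Bd F ∧ ∀ e, F e =
      M e * (1 + e * s e)⁻¹ :=
    ⟨_, by repeat' first | assumption | exact Bd.id | exact Bd.const _ | apply Bd.add | apply Bd.sub | apply Bd.mul | apply Bd.neg | apply Bd.pow, fun _ => rfl⟩
  obtain ⟨w₁, hb_w₁, h_w₁⟩ : ∃ F : ℝ → ℝ, Bd F ∧ ∀ e, F e =
      (2 * c₃ - 2 * c₂ ^ 2) + e * w₂ e :=
    ⟨_, by repeat' first | assumption | exact Bd.id | exact Bd.const _ | apply Bd.add | apply Bd.sub | apply Bd.mul | apply Bd.neg | apply Bd.pow, fun _ => rfl⟩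
  obtain ⟨w, hb_w, h_w⟩ : ∃ F : ℝ → ℝ, Bd F ∧ ∀ e, F e =
      c₂ + e * w₁ e :=
    ⟨_, by repeat' first | assumption | exact Bd.id | exact Bd.const _ | apply Bd.add | apply Bd.sub | apply Bd.mul | apply Bd.neg | apply Bd.pow, fun _ => rfl⟩
  have hY : ∀ᶠ e in 𝓝[≠] (0:ℝ), newtonStep g e = e ^ 2 * w e := by
    filter_upwards [hG', hg', hGne] with e h1 h2 h3
    unfold newtonStep
    rw [h1, h2, h_w, h_w₁, h_w₂]
    have e1 : e * (1 + c₂ * e + e ^ 2 * μ₂ e) = (e - e ^ 2 * (c₂ + e * ((2 * c₃ - 2 * c₂ ^ 2) +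
      e * (M e * (1 + e * s e)⁻¹)))) * (1 + e * s e) := by
      have e2 : (1 + e * s e)⁻¹ * (1 + e * s e) = 1 := inv_mul_cancel₀ h3
      rw [h_M, h_μ₂]
      have e3 := h_s e
      have e4 := h_s₂ e
      generalize (1 + e * s e)⁻¹ = I at *
      generalize s e = S at *
      generalize s₂ e = S2 at *
      linear_combination (e ^ 4 * (3 * c₄ + 4 * c₅ * e + e ^ 2 * (r₁ e - r₀ e) - 2 * c₂ * (2 * c₃ - 2 * c₂ ^ 2) - S2 * (c₂ + (2 * c₃ - 2 * c₂ ^ 2) * e))) * e2 - (e ^ 2 - e ^ 3 * c₂ - e ^ 4 * (2 * c₃ - 2 * c₂ ^ 2)) * e3 - e ^ 3 * e4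
    rw [e1, mul_div_assoc, div_self h3]; ring
  obtain ⟨ry, hb_ry, h_ry⟩ := lip_aux R hRd hRO (fun e => e ^ 2 * w e) (fun _ => 0)
    hb_w.le_abs (Eventually.of_forall fun e => by simp)
  obtain ⟨κ, hb_κ, h_κ⟩ : ∃ F : ℝ → ℝ, Bd F ∧ ∀ e, F e =
      e * (w e) ^ 2 * (c₃ + c₄ * (e ^ 2 * w e) + c₅ * (e ^ 2 * w e) ^ 2) + e ^ 2 * ry e :=
    ⟨_, by repeat' first | assumption | exact Bd.id | exact Bd.const _ | apply Bd.add | apply Bd.sub | apply Bd.mul | apply Bd.neg | apply Bd.pow, fun _ => rfl⟩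
  have hgY : ∀ᶠ e in 𝓝[≠] (0:ℝ), g (e ^ 2 * w e) =
      e ^ 2 * w e * (1 + c₂ * e ^ 2 * w e + e ^ 3 * κ e) := by
    filter_upwards [h_ry] with e h1
    rw [hgR, hP, h_κ]
    rw [hR0] at h1
    linear_combination h1
  obtain ⟨h, hb_h, h_h⟩ : ∃ F : ℝ → ℝ, Bd F ∧ ∀ e, F e =
      c₂ * w e + e * κ e :=
    ⟨_, by repeat' first | assumption | exact Bd.id | exact Bd.const _ | apply Bd.add | apply Bd.sub | apply Bd.mul | apply Bd.neg | apply Bd.pow, fun _ => rfl⟩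
  obtain ⟨A, hb_A, h_A⟩ : ∃ F : ℝ → ℝ, Bd F ∧ ∀ e, F e =
      (4 * c₄ + 5 * c₅ * e + e ^ 2 * r₁ e) - κ e - c₂ * w₁ e :=
    ⟨_, by repeat' first | assumption | exact Bd.id | exact Bd.const _ | apply Bd.add | apply Bd.sub | apply Bd.mul | apply Bd.neg | apply Bd.pow, fun _ => rfl⟩
  obtain ⟨A₂, hb_A₂, h_A₂⟩ : ∃ F : ℝ → ℝ, Bd F ∧ ∀ e, F e =
      2 * (A e + c₂ * (3 * c₃ - c₂ ^ 2) + c₂ * e * A e + μ₂ e * (2 * c₂ + (3 * c₃ - c₂ ^ 2) * e + e ^ 2 * A e)) :=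
    ⟨_, by repeat' first | assumption | exact Bd.id | exact Bd.const _ | apply Bd.add | apply Bd.sub | apply Bd.mul | apply Bd.neg | apply Bd.pow, fun _ => rfl⟩
  obtain ⟨J, hb_J, h_J⟩ : ∃ F : ℝ → ℝ, Bd F ∧ ∀ e, F e =
      (h e - 5 * s₂ e) + h e * (-4 - 10 * c₂ * e + e ^ 2 * (h e - 5 * s₂ e)) :=
    ⟨_, by repeat' first | assumption | exact Bd.id | exact Bd.const _ | apply Bd.add | apply Bd.sub | apply Bd.mul | apply Bd.neg | apply Bd.pow, fun _ => rfl⟩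
  obtain ⟨b₁, hb_b₁, h_b₁⟩ : ∃ F : ℝ → ℝ, Bd F ∧ ∀ e, F e =
      A₂ e + J e * w e - 10 * c₂ * w₁ e - 4 * w₂ e :=
    ⟨_, by repeat' first | assumption | exact Bd.id | exact Bd.const _ | apply Bd.add | apply Bd.sub | apply Bd.mul | apply Bd.neg | apply Bd.pow, fun _ => rfl⟩
  obtain ⟨q₁, hb_q₁, h_q₁⟩ : ∃ F : ℝ → ℝ, Bd F ∧ ∀ e, F e =
      2 * (c₂ + e * μ₂ e) - 5 * w e * (1 + e ^ 2 * h e) :=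
    ⟨_, by repeat' first | assumption | exact Bd.id | exact Bd.const _ | apply Bd.add | apply Bd.sub | apply Bd.mul | apply Bd.neg | apply Bd.pow, fun _ => rfl⟩
  obtain ⟨p, hb_p, h_p⟩ : ∃ F : ℝ → ℝ, Bd F ∧ ∀ e, F e =
      q₁ e + 2 * s e + e * s e * q₁ e :=
    ⟨_, by repeat' first | assumption | exact Bd.id | exact Bd.const _ | apply Bd.add | apply Bd.sub | apply Bd.mul | apply Bd.neg | apply Bd.pow, fun _ => rfl⟩
  have hqne := hb_q₁.ne 2 two_ne_zero
  have hpinv := hb_p.inv 2 two_ne_zero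
  have hpne := hb_p.ne 2 two_ne_zero
  obtain ⟨v₁, hb_v₁, h_v₁⟩ : ∃ F : ℝ → ℝ, Bd F ∧ ∀ e, F e =
      (b₁ e + c₃ * p e) * (2 + e * p e)⁻¹ :=
    ⟨_, by repeat' first | assumption | exact Bd.id | exact Bd.const _ | apply Bd.add | apply Bd.sub | apply Bd.mul | apply Bd.neg | apply Bd.pow, fun _ => rfl⟩
  obtain ⟨v, hb_v, h_v⟩ : ∃ F : ℝ → ℝ, Bd F ∧ ∀ e, F e =
      -c₃ + e * v₁ e :=
    ⟨_, by repeat' first | assumption | exact Bd.id | exact Bd.const _ | apply Bd.add | apply Bd.sub | apply Bd.mul | apply Bd.neg | apply Bd.pow, fun _ => rfl⟩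
  have hZ : ∀ᶠ e in 𝓝[≠] (0:ℝ), kungStep g e = e ^ 4 * w e * v e := by
    filter_upwards [hG', hg', hGne, hY, hgY, hqne, hpne, hne] with e h1 h2 h3 h4 h5 h6 h7 h8
    unfold kungStep
    rw [h4, h5, h1, h2]
    have f1 : 2 * (e * (1 + c₂ * e + e ^ 2 * μ₂ e)) -
        5 * (e ^ 2 * w e * (1 + c₂ * e ^ 2 * w e + e ^ 3 * κ e)) = e * (2 + e * q₁ e) := by
      rw [h_q₁, h_h]; ring
    have f2 : v e * ((1 + e * s e) * (2 + e * q₁ e)) = -2 * c₃ + e * b₁ e := by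
      have : (1 + e * s e) * (2 + e * q₁ e) = 2 + e * p e := by rw [h_p]; ring
      rw [this, h_v, h_v₁]
      field_simp
      ring
    have f3 : (1 + e * s e) * (2 + e * q₁ e) - (2 * (1 + c₂ * e + e ^ 2 * μ₂ e) -
        e * w e * (1 + e ^ 2 * h e)) * (1 + e ^ 2 * h e) = e ^ 2 * (-2 * c₃ + e * b₁ e) := by
      rw [h_b₁, h_J, h_A₂, h_A, h_q₁, h_s, h_h, h_s₂, h_w, h_w₁]; ring
    have f4 : 1 + c₂ * e ^ 2 * w e + e ^ 3 * κ e = 1 + e ^ 2 * h e := by rw [h_h]; ring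
    rw [f1, f4]
    rw [← f2] at f3
    have f5 : (2 * (e * (1 + c₂ * e + e ^ 2 * μ₂ e)) - e ^ 2 * w e * (1 + e ^ 2 * h e)) /
        (e * (2 + e * q₁ e)) = (2 * (1 + c₂ * e + e ^ 2 * μ₂ e) -
        e * w e * (1 + e ^ 2 * h e)) / (2 + e * q₁ e) := by
      rw [← mul_div_mul_left _ (2 + e * q₁ e) h8]; congr 1; ring
    rw [f5, div_mul_div_comm, sub_eq_iff_eq_add, ← sub_eq_iff_eq_add', eq_div_iff (mul_ne_zero h6 h3)]
    linear_combination e ^ 2 * w e * f3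
  obtain ⟨wv, hb_wv, h_wv⟩ : ∃ F : ℝ → ℝ, Bd F ∧ ∀ e, F e =
      w e * v e :=
    ⟨_, by repeat' first | assumption | exact Bd.id | exact Bd.const _ | apply Bd.add | apply Bd.sub | apply Bd.mul | apply Bd.neg | apply Bd.pow, fun _ => rfl⟩
  obtain ⟨zz, hb_zz, h_zz⟩ : ∃ F : ℝ → ℝ, Bd F ∧ ∀ e, F e =
      e ^ 2 * wv e :=
    ⟨_, by repeat' first | assumption | exact Bd.id | exact Bd.const _ | apply Bd.add | apply Bd.sub | apply Bd.mul | apply Bd.neg | apply Bd.pow, fun _ => rfl⟩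
  obtain ⟨rz, hb_rz, h_rz⟩ := lip_aux R hRd hRO (fun e => e ^ 2 * zz e) (fun _ => 0)
    hb_zz.le_abs (Eventually.of_forall fun e => by simp)
  obtain ⟨lam, hb_lam, h_lam⟩ := lip_aux R hRd hRO (fun e => e ^ 2 * w e) (fun e => e ^ 2 * zz e)
    hb_w.le_abs hb_zz.le_abs
  obtain ⟨kz, hb_kz, h_kz⟩ : ∃ F : ℝ → ℝ, Bd F ∧ ∀ e, F e =
      e ^ 3 * (wv e) ^ 2 * (c₃ + c₄ * (e ^ 4 * wv e) + c₅ * (e ^ 4 * wv e) ^ 2) + rz e :=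
    ⟨_, by repeat' first | assumption | exact Bd.id | exact Bd.const _ | apply Bd.add | apply Bd.sub | apply Bd.mul | apply Bd.neg | apply Bd.pow, fun _ => rfl⟩
  have hgZ : ∀ᶠ e in 𝓝[≠] (0:ℝ), g (e ^ 4 * w e * v e) =
      e ^ 4 * wv e * (1 + c₂ * (e ^ 4 * wv e) + e ^ 5 * kz e) := by
    filter_upwards [h_rz] with e h1
    have e1 : e ^ 4 * w e * v e = e ^ 2 * zz e := by rw [h_zz, h_wv]; ring
    rw [e1, hgR, hP, h_kz]
    rw [hR0] at h1
    rw [h_zz] at *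
    linear_combination h1
  obtain ⟨i₁, hb_i₁, h_i₁⟩ : ∃ F : ℝ → ℝ, Bd F ∧ ∀ e, F e =
      -(e ^ 2 * wv e) :=
    ⟨_, by repeat' first | assumption | exact Bd.id | exact Bd.const _ | apply Bd.add | apply Bd.sub | apply Bd.mul | apply Bd.neg | apply Bd.pow, fun _ => rfl⟩
  obtain ⟨i₂, hb_i₂, h_i₂⟩ : ∃ F : ℝ → ℝ, Bd F ∧ ∀ e, F e =
      -w e :=
    ⟨_, by repeat' first | assumption | exact Bd.id | exact Bd.const _ | apply Bd.add | apply Bd.sub | apply Bd.mul | apply Bd.neg | apply Bd.pow, fun _ => rfl⟩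
  obtain ⟨i₃, hb_i₃, h_i₃⟩ : ∃ F : ℝ → ℝ, Bd F ∧ ∀ e, F e =
      -(e * v e) :=
    ⟨_, by repeat' first | assumption | exact Bd.id | exact Bd.const _ | apply Bd.add | apply Bd.sub | apply Bd.mul | apply Bd.neg | apply Bd.pow, fun _ => rfl⟩
  have hn1 := hb_i₁.ne 1 one_ne_zero
  have hn2 := hb_i₂.ne 1 one_ne_zero
  have hn3 := hb_i₃.ne 1 one_ne_zero
  have hv1 := hb_i₁.inv 1 one_ne_zero
  have hv2 := hb_i₂.inv 1 one_ne_zero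
  obtain ⟨H₁, hb_H₁, h_H₁⟩ : ∃ F : ℝ → ℝ, Bd F ∧ ∀ e, F e =
      (1 + e * i₁ e)⁻¹ :=
    ⟨_, by repeat' first | assumption | exact Bd.id | exact Bd.const _ | apply Bd.add | apply Bd.sub | apply Bd.mul | apply Bd.neg | apply Bd.pow, fun _ => rfl⟩
  obtain ⟨H₂, hb_H₂, h_H₂⟩ : ∃ F : ℝ → ℝ, Bd F ∧ ∀ e, F e =
      (1 + e * i₂ e)⁻¹ :=
    ⟨_, by repeat' first | assumption | exact Bd.id | exact Bd.const _ | apply Bd.add | apply Bd.sub | apply Bd.mul | apply Bd.neg | apply Bd.pow, fun _ => rfl⟩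
  obtain ⟨rem, hb_rem, h_rem⟩ : ∃ F : ℝ → ℝ, Bd F ∧ ∀ e, F e =
      2 * (r₀ e - rz e * e ^ 3 * wv e) * H₁ e + lam e - (r₀ e - ry e * e * w e) * H₂ e - (1 - e ^ 3 * wv e) * H₂ e * ((r₀ e - ry e * e * w e) * H₂ e - r₁ e) - r₁ e :=
    ⟨_, by repeat' first | assumption | exact Bd.id | exact Bd.const _ | apply Bd.add | apply Bd.sub | apply Bd.mul | apply Bd.neg | apply Bd.pow, fun _ => rfl⟩
  obtain ⟨T, hb_T, h_T⟩ : ∃ F : ℝ → ℝ, Bd F ∧ ∀ e, F e =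
      (1 - e ^ 3 * wv e) ^ 2 * (1 - e ^ 2 * v e) :=
    ⟨_, by repeat' first | assumption | exact Bd.id | exact Bd.const _ | apply Bd.add | apply Bd.sub | apply Bd.mul | apply Bd.neg | apply Bd.pow, fun _ => rfl⟩
  obtain ⟨T₁, hb_T₁, h_T₁⟩ : ∃ F : ℝ → ℝ, Bd F ∧ ∀ e, F e =
      -(e * v e) + (-(2 * e ^ 2 * wv e) + e ^ 5 * (wv e) ^ 2) * (1 - e ^ 2 * v e) :=
    ⟨_, by repeat' first | assumption | exact Bd.id | exact Bd.const _ | apply Bd.add | apply Bd.sub | apply Bd.mul | apply Bd.neg | apply Bd.pow, fun _ => rfl⟩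
  obtain ⟨d, hb_d, h_d⟩ : ∃ F : ℝ → ℝ, Bd F ∧ ∀ e, F e =
      3 * c₃ * e ^ 3 * (wv e) ^ 2 + 4 * c₄ * e ^ 7 * (wv e) ^ 3 + c₄ * w e * T₁ e + c₅ * (5 * e ^ 11 * (wv e) ^ 4 + w e * T e * (2 * e ^ 3 * wv e + 2 + e * w e)) + rem e :=
    ⟨_, by repeat' first | assumption | exact Bd.id | exact Bd.const _ | apply Bd.add | apply Bd.sub | apply Bd.mul | apply Bd.neg | apply Bd.pow, fun _ => rfl⟩
  obtain ⟨m, hb_m, h_m⟩ : ∃ F : ℝ → ℝ, Bd F ∧ ∀ e, F e =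
      2 * c₂ * wv e + c₄ * w e + e * d e :=
    ⟨_, by repeat' first | assumption | exact Bd.id | exact Bd.const _ | apply Bd.add | apply Bd.sub | apply Bd.mul | apply Bd.neg | apply Bd.pow, fun _ => rfl⟩
  have hD : ∀ᶠ e in 𝓝[≠] (0:ℝ), w e ≠ 0 → hermiteDerivApprox g e = 1 + e ^ 4 * m e := by
    filter_upwards [h_r₁, h_r₀, hY, hZ, h_ry, h_rz, h_lam, hn1, hn2, hn3, hne]
      with e k1 k2 k3 k4 k5 k6 k7 k8 k9 k10 k11 k12
    have j1 : (1 + e * i₁ e) * H₁ e = 1 := by rw [h_H₁]; exact mul_inv_cancel₀ k8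
    have j2 : (1 + e * i₂ e) * H₂ e = 1 := by rw [h_H₂]; exact mul_inv_cancel₀ k9
    rw [h_i₁] at j1 k8
    rw [h_i₂] at j2 k9
    rw [h_i₃] at k10
    have zeq : e ^ 2 * zz e = e ^ 4 * wv e := by rw [h_zz]; ring
    rw [zeq] at k6 k7
    have wveq := h_wv e
    rw [mul_assoc (e ^ 4), ← wveq] at k4
    have nxz : e - e ^ 4 * wv e ≠ 0 := by
      have : e - e ^ 4 * wv e = e * (1 + e * -(e ^ 2 * wv e)) := by ring
      rw [this]; exact mul_ne_zero k11 k8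
    have nxy : e - e ^ 2 * w e ≠ 0 := by
      have : e - e ^ 2 * w e = e * (1 + e * -w e) := by ring
      rw [this]; exact mul_ne_zero k11 k9
    have nyz : e ^ 2 * w e - e ^ 4 * wv e ≠ 0 := by
      have : e ^ 2 * w e - e ^ 4 * wv e = e ^ 2 * w e * (1 + e * -(e * v e)) := by rw [wveq]; ring
      rw [this]; exact mul_ne_zero (mul_ne_zero (pow_ne_zero _ k11) k12) k10
    have nyx : e ^ 2 * w e - e ≠ 0 := by
      rw [← neg_sub]; exact neg_ne_zero.2 nxy
    rw [hR0] at k2 k5 k6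
    have d1 : divDiff g e (e ^ 4 * wv e) = (1 + c₂ * (e + e ^ 4 * wv e)
        + c₃ * (e ^ 2 + e * (e ^ 4 * wv e) + (e ^ 4 * wv e) ^ 2)
        + c₄ * (e ^ 3 + e ^ 2 * (e ^ 4 * wv e) + e * (e ^ 4 * wv e) ^ 2 + (e ^ 4 * wv e) ^ 3)
        + c₅ * (e ^ 4 + e ^ 3 * (e ^ 4 * wv e) + e ^ 2 * (e ^ 4 * wv e) ^ 2
          + e * (e ^ 4 * wv e) ^ 3 + (e ^ 4 * wv e) ^ 4))
        + e ^ 5 * (r₀ e - rz e * e ^ 3 * wv e) * H₁ e := by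
      unfold divDiff
      rw [div_eq_iff nxz, hgR, hgR, hP, hP]
      linear_combination k2 - k6 - e ^ 6 * (r₀ e - rz e * e ^ 3 * wv e) * j1
    have d2 : divDiff g (e ^ 2 * w e) (e ^ 4 * wv e) = (1 + c₂ * (e ^ 2 * w e + e ^ 4 * wv e)
        + c₃ * ((e ^ 2 * w e) ^ 2 + (e ^ 2 * w e) * (e ^ 4 * wv e) + (e ^ 4 * wv e) ^ 2)
        + c₄ * ((e ^ 2 * w e) ^ 3 + (e ^ 2 * w e) ^ 2 * (e ^ 4 * wv e)
          + (e ^ 2 * w e) * (e ^ 4 * wv e) ^ 2 + (e ^ 4 * wv e) ^ 3)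
        + c₅ * ((e ^ 2 * w e) ^ 4 + (e ^ 2 * w e) ^ 3 * (e ^ 4 * wv e)
          + (e ^ 2 * w e) ^ 2 * (e ^ 4 * wv e) ^ 2
          + (e ^ 2 * w e) * (e ^ 4 * wv e) ^ 3 + (e ^ 4 * wv e) ^ 4))
        + e ^ 5 * lam e := by
      unfold divDiff
      rw [div_eq_iff nyz, hgR, hgR, hP, hP]
      linear_combination k7
    have d3 : divDiff g e (e ^ 2 * w e) = (1 + c₂ * (e + e ^ 2 * w e)
        + c₃ * (e ^ 2 + e * (e ^ 2 * w e) + (e ^ 2 * w e) ^ 2)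
        + c₄ * (e ^ 3 + e ^ 2 * (e ^ 2 * w e) + e * (e ^ 2 * w e) ^ 2 + (e ^ 2 * w e) ^ 3)
        + c₅ * (e ^ 4 + e ^ 3 * (e ^ 2 * w e) + e ^ 2 * (e ^ 2 * w e) ^ 2
          + e * (e ^ 2 * w e) ^ 3 + (e ^ 2 * w e) ^ 4))
        + e ^ 5 * (r₀ e - ry e * e * w e) * H₂ e := by
      unfold divDiff
      rw [div_eq_iff nxy, hgR, hgR, hP, hP]
      linear_combination k2 - k5 - e ^ 6 * (r₀ e - ry e * e * w e) * j2
    have d4 : divDiff g (e ^ 2 * w e) e = divDiff g e (e ^ 2 * w e) := by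
      unfold divDiff
      rw [← neg_sub (g e), ← neg_sub e, neg_div_neg_eq]
    have d5 : divDiff2 g (e ^ 2 * w e) e = (c₂ + c₃ * (2 * e + e ^ 2 * w e)
        + c₄ * (3 * e ^ 2 + 2 * e * (e ^ 2 * w e) + (e ^ 2 * w e) ^ 2)
        + c₅ * (4 * e ^ 3 + 3 * e ^ 2 * (e ^ 2 * w e) + 2 * e * (e ^ 2 * w e) ^ 2
          + (e ^ 2 * w e) ^ 3))
        - e ^ 4 * H₂ e * ((r₀ e - ry e * e * w e) * H₂ e - r₁ e) := by
      unfold divDiff2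
      rw [d4, d3, k1, div_eq_iff nyx]
      linear_combination -e ^ 5 * ((r₀ e - ry e * e * w e) * H₂ e - r₁ e) * j2
    unfold hermiteDerivApprox
    rw [k3, k4, d1, d2, d3, d5, k1, h_m, h_d, h_rem, h_T, h_T₁]
    simp only [wveq]
    ring
  obtain ⟨em, hb_em, h_em⟩ : ∃ F : ℝ → ℝ, Bd F ∧ ∀ e, F e =
      e ^ 3 * m e :=
    ⟨_, by repeat' first | assumption | exact Bd.id | exact Bd.const _ | apply Bd.add | apply Bd.sub | apply Bd.mul | apply Bd.neg | apply Bd.pow, fun _ => rfl⟩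
  have hDne := hb_em.ne 1 one_ne_zero
  have hDinv := hb_em.inv 1 one_ne_zero
  obtain ⟨ω, hb_ω, h_ω⟩ : ∃ F : ℝ → ℝ, Bd F ∧ ∀ e, F e =
      c₂ * v₁ e - c₃ * w₁ e + e * w₁ e * v₁ e :=
    ⟨_, by repeat' first | assumption | exact Bd.id | exact Bd.const _ | apply Bd.add | apply Bd.sub | apply Bd.mul | apply Bd.neg | apply Bd.pow, fun _ => rfl⟩
  obtain ⟨E, hb_E, h_E⟩ : ∃ F : ℝ → ℝ, Bd F ∧ ∀ e, F e =
      (c₂ * ω e * (wv e - c₂ * c₃) + c₄ * (w e * ω e - c₂ * c₃ * w₁ e) + wv e * (d e - kz e) - (c₂ ^ 3 * c₃ ^ 2 - c₂ ^ 2 * c₃ * c₄) * e ^ 3 * m e) * (1 + e * em e)⁻¹ :=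
    ⟨_, by repeat' first | assumption | exact Bd.id | exact Bd.const _ | apply Bd.add | apply Bd.sub | apply Bd.mul | apply Bd.neg | apply Bd.pow, fun _ => rfl⟩
  have hfin : ∀ᶠ e in 𝓝[≠] (0:ℝ), eighthOrderStep g e -
      (c₂ ^ 3 * c₃ ^ 2 - c₂ ^ 2 * c₃ * c₄) * e ^ 8 = e ^ 9 * E e := by
    filter_upwards [hZ, hgZ, hD, hDne] with e k1 k2 k3 k4
    have l1 : eighthOrderStep g e = e ^ 4 * wv e -
        e ^ 4 * wv e * (1 + c₂ * (e ^ 4 * wv e) + e ^ 5 * kz e) / (1 + e * em e) := by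
      unfold eighthOrderStep
      rw [k1, k2]
      by_cases hw0 : w e = 0
      · have : wv e = 0 := by rw [h_wv, hw0]; ring
        rw [this, hw0]; simp
      · rw [k3 hw0, h_em, h_wv]; congr 1
        · ring
        · congr 1; ring
    have l2 : wv e = -(c₂ * c₃) + e * ω e := by rw [h_wv, h_w, h_v, h_ω]; ring
    have l3 := h_w e
    have l4 : e * em e = e ^ 4 * m e := by rw [h_em]; ring
    have l5 := h_m e
    rw [l1, h_E]
    rw [l4] at k4 ⊢
    have l6 : (1 + e ^ 4 * m e) * (1 + e ^ 4 * m e)⁻¹ = 1 := mul_inv_cancel₀ k4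
    rw [div_eq_mul_inv]
    have l7 : e ^ 4 * wv e * (1 + e ^ 4 * m e)
        - e ^ 4 * wv e * (1 + c₂ * (e ^ 4 * wv e) + e ^ 5 * kz e)
        - (c₂ ^ 3 * c₃ ^ 2 - c₂ ^ 2 * c₃ * c₄) * e ^ 8 * (1 + e ^ 4 * m e) =
        e ^ 9 * (c₂ * ω e * (wv e - c₂ * c₃) + c₄ * (w e * ω e - c₂ * c₃ * w₁ e)
          + wv e * (d e - kz e) - (c₂ ^ 3 * c₃ ^ 2 - c₂ ^ 2 * c₃ * c₄) * e ^ 3 * m e) := by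
      rw [l5, l2, l3]; ring
    linear_combination (1 + e ^ 4 * m e)⁻¹ * l7
      - (e ^ 4 * wv e - (c₂ ^ 3 * c₃ ^ 2 - c₂ ^ 2 * c₃ * c₄) * e ^ 8) * l6
  refine (IsBigO.congr' (f₁ := fun e => e ^ 9 * E e) (g₁ := fun e => e ^ 9 * 1)
    ((isBigO_refl _ _).mul hb_E) ?_ (by simp))
  filter_upwards [hfin] with e he
  exact he.symm

theorem eighthOrderStep_error_expansion (f : ℝ → ℝ) (α : ℝ)
    (hf : ∃ s ∈ 𝓝 α, ContDiffOn ℝ (⊤ : ℕ∞) f s)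
    (hroot : f α = 0) (hsimple : deriv f α ≠ 0)
    (c₂ c₃ c₄ : ℝ)
    (hc₂ : c₂ = iteratedDeriv 2 f α / (2 * deriv f α))
    (hc₃ : c₃ = iteratedDeriv 3 f α / (6 * deriv f α))
    (hc₄ : c₄ = iteratedDeriv 4 f α / (24 * deriv f α)) :
    (fun x => eighthOrderStep f x - α -
        (c₂ ^ 3 * c₃ ^ 2 - c₂ ^ 2 * c₃ * c₄) * (x - α) ^ 8)
      =O[𝓝[≠] α] fun x => (x - α) ^ 9 := by
  obtain ⟨hdiff, hO⟩ := taylor_deriv f α hf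
  have hadd : Tendsto (fun t : ℝ => α + t) (𝓝 0) (𝓝 α) := by
    have : Tendsto (fun t : ℝ => α + t) (𝓝 0) (𝓝 (α + 0)) := tendsto_const_nhds.add tendsto_id
    simpa using this
  have hm := main_aux (fun t => f (α + t) / deriv f α) c₂ c₃ c₄
    (iteratedDeriv 5 f α / (120 * deriv f α)) (by simp [hroot])
    (by
      filter_upwards [hadd.eventually hdiff] with t ht
      exact (ht.comp t (by fun_prop)).div_const _)
    (by
      have h1 := (hO.comp_tendsto hadd).const_mul_left (deriv f α)⁻¹
      refine (h1.congr_left ?_).congr_right ?_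
      · intro t
        rw [deriv_div_const, deriv_comp_const_add, hc₂, hc₃, hc₄]
        simp only [Function.comp, add_sub_cancel_left]
        field_simp
        ring
      · intro t
        simp only [Function.comp, add_sub_cancel_left])
  have hsub : Tendsto (fun x : ℝ => x - α) (𝓝[≠] α) (𝓝[≠] 0) := by
    refine tendsto_nhdsWithin_iff.2 ⟨?_, ?_⟩
    · have : Tendsto (fun x : ℝ => x - α) (𝓝 α) (𝓝 (α - α)) := tendsto_id.sub tendsto_const_nhds
      rw [sub_self] at this
      exact tendsto_nhdsWithin_of_tendsto_nhds this
    · filter_upwards [self_mem_nhdsWithin] with x hx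
      exact sub_ne_zero.2 hx
  refine (hm.comp_tendsto hsub).congr_left ?_
  intro x
  have := eighth_scale f α (deriv f α) hsimple (x - α)
  rw [add_sub_cancel] at this
  simp only [Function.comp]
  rw [this]
  ring
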